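/- arXiv:2311.09789 — 2 statements merged into one kernel-verified Lean document; each statement's English description precedes it below -/
import Mathlib

section
/- The set Rec = {e : e indexes some computable subset of ℕ} of Gödel codes of characteristic functions of computable sets is not recursively enumerable. -/
/-- A weak order: asymmetric and negatively transitive. -/
def IsWeakPref {X : Type*} (P : X → X → Prop) : Prop :=
  (∀ x y : X, P x y → ¬ P y x) ∧ ∀ x y z : X, ¬ P x y → ¬ P y z → ¬ P x z

/-- A profile assigns a weak order on the alternatives to each voter in `ℕ`. -/
def IsProf {X : Type*} (f : ℕ → X → X → Prop) : Prop := ∀ v : ℕ, IsWeakPref (f v)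

/-- A set of naturals is computable if its membership predicate is computable. -/
def ComputableSet (A : Set ℕ) : Prop := ComputablePred (· ∈ A)

/-- A profile is REC-measurable if each of its preference coalitions is computable. -/
def RECMeasurable {X : Type*} (f : ℕ → X → X → Prop) : Prop :=
  ∀ a b : X, ComputableSet {v : ℕ | f v a b}

/-- The Gödel numbering of partial recursive functions via `Nat.Partrec.Code`. -/
def phi (e : ℕ) : ℕ →. ℕ := (Denumerable.ofNat Nat.Partrec.Code e).eval

/-- `e` indexes `A` if `φ_e` is the characteristic function of `A`. -/
def Indexes (e : ℕ) (A : Set ℕ) : Prop :=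
  ∀ n : ℕ, (n ∈ A → phi e n = Part.some 1) ∧ (n ∉ A → phi e n = Part.some 0)

/-- The set of Gödel codes of characteristic functions of computable sets. -/
def RecSet : Set ℕ := {e : ℕ | ∃ A : Set ℕ, ComputableSet A ∧ Indexes e A}

/-- A set of naturals is r.e. if it is the domain of a partial recursive function. -/
def REset (A : Set ℕ) : Prop :=
  ∃ g : ℕ →. ℕ, Partrec g ∧ ∀ n : ℕ, n ∈ A ↔ (g n).Dom

/-!
By the recursion theorem there is, for every r.e. property `p` of codes and every partial recursive
`f`, a code that knows itself: on input `n` it computes `f n`, unless `n` steps suffice to see that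
the code satisfies `p`, in which case it diverges. If every code of `f` satisfies `p`, then this
code satisfies `p` too, as otherwise it would compute `f`; hence it diverges on almost every input.
So an r.e. property of codes shared by all codes of some `f` cannot force totality, whereas
membership in `RecSet` does, and it is shared by all codes of the constant function `0`.
-/

open Nat.Partrec (Code)

theorem exists_monotone_computable_of_rePred {α : Type*} [Primcodable α] {p : α → Prop}
    (hp : REPred p) :
    ∃ s : α → ℕ → Bool, Computable₂ s ∧ (∀ a, Monotone (s a)) ∧ ∀ a, p a ↔ ∃ n, s a n = true := by
  obtain ⟨c, hc⟩ := Code.exists_code.1 hp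
  refine ⟨fun a n => (c.evaln n (Encodable.encode a)).isSome, ?_, fun a m n hmn => ?_, fun a => ?_⟩
  · exact Primrec.option_isSome.to_comp.comp <| Code.primrec_evaln.to_comp.comp <|
      (Computable.snd.pair (Computable.const c)).pair (Computable.encode.comp Computable.fst)
  · refine Bool.le_iff_imp.2 fun hm => ?_
    obtain ⟨x, hx⟩ := Option.isSome_iff_exists.1 hm
    exact Option.isSome_iff_exists.2 ⟨x, Code.evaln_mono hmn hx⟩
  · calc
      p a ↔ ∃ x, x ∈ c.eval (Encodable.encode a) := by simp [hc]
      _ ↔ ∃ x n, x ∈ c.evaln n (Encodable.encode a) := by simp only [Code.evaln_complete]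
      _ ↔ ∃ n, (c.evaln n (Encodable.encode a)).isSome = true := by
        simp only [Option.isSome_iff_exists, Option.mem_def]
        exact exists_comm

/-- One half of the Rice–Shapiro theorem, for properties `p` that need not be extensional. -/
theorem exists_code_finite_dom_le_of_rePred {p : Code → Prop} (hp : REPred p) {f : ℕ →. ℕ}
    (hf : Partrec f) (hpf : ∀ c : Code, c.eval = f → p c) :
    ∃ c : Code, p c ∧ c.eval.Dom.Finite ∧ ∀ n, c.eval n ≤ f n := by
  obtain ⟨s, hs, s_mono, hps⟩ := exists_monotone_computable_of_rePred hp
  have truncation_partrec : Partrec₂ fun c n => bif s c n then Part.none else f n :=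
    Partrec.cond hs Partrec.none (hf.comp Computable.snd)
  obtain ⟨c, hc⟩ := Code.fixed_point₂ truncation_partrec
  have eval_of_false {n : ℕ} (hn : s c n = false) : c.eval n = f n := by simp [hc, hn]
  have eval_of_true {n : ℕ} (hn : s c n = true) : c.eval n = Part.none := by simp [hc, hn]
  have hpc : p c := by
    by_contra hnot
    have s_false (n : ℕ) : s c n = false :=
      Bool.eq_false_iff.2 fun hn => hnot ((hps c).2 ⟨n, hn⟩)
    exact hnot (hpf c (funext fun n => eval_of_false (s_false n)))
  obtain ⟨N, hN⟩ := (hps c).1 hpc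
  refine ⟨c, hpc, (Set.finite_Iio N).subset fun n hn => ?_, fun n => ?_⟩
  · by_contra hNn
    have hsn : s c n = true := Bool.le_iff_imp.1 (s_mono c (not_lt.1 hNn)) hN
    have hdom : (c.eval n).Dom := hn
    exact Part.not_none_dom (eval_of_true hsn ▸ hdom)
  · cases hn : s c n
    · exact (eval_of_false hn).le
    · exact eval_of_true hn ▸ bot_le

theorem not_rePred_of_forall_eval_dom {p : Code → Prop} {f : ℕ →. ℕ} (hf : Partrec f)
    (hpf : ∀ c : Code, c.eval = f → p c) (p_total : ∀ c : Code, p c → ∀ n, (c.eval n).Dom) :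
    ¬ REPred p := by
  intro hp
  obtain ⟨c, hpc, dom_finite, -⟩ := exists_code_finite_dom_le_of_rePred hp hf hpf
  exact Set.infinite_univ (dom_finite.subset fun n _ => p_total c hpc n)

theorem phi_encode (c : Code) : phi (Encodable.encode c) = c.eval := by
  rw [phi, Denumerable.ofNat_encode]

theorem REset.rePred_comp {α : Type*} [Primcodable α] {A : Set ℕ} (hA : REset A) {f : α → ℕ}
    (hf : Computable f) : REPred fun a => f a ∈ A := by
  obtain ⟨g, hg, mem_iff⟩ := hA
  exact (hg.comp hf).dom_re.of_eq fun a => (mem_iff (f a)).symm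

theorem Indexes.phi_dom {e : ℕ} {A : Set ℕ} (h : Indexes e A) (n : ℕ) : (phi e n).Dom := by
  by_cases hn : n ∈ A
  · simp [(h n).1 hn]
  · simp [(h n).2 hn]

theorem indexes_empty_iff {e : ℕ} : Indexes e ∅ ↔ ∀ n, phi e n = Part.some 0 := by
  simp [Indexes]

theorem computableSet_empty : ComputableSet ∅ :=
  ComputablePred.computable_iff.2 ⟨fun _ => false, Computable.const _, by ext; simp⟩

/-- the set of Gödel codes of characteristic functions of computable
sets is not recursively enumerable. -/
theorem recSet_not_re : ¬ REset RecSet := by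
  intro hre
  have zero_partrec : Partrec fun _ : ℕ => Part.some 0 := Computable.const 0
  refine not_rePred_of_forall_eval_dom zero_partrec (fun c hc => ?_) (fun c hc => ?_)
    (hre.rePred_comp Computable.encode)
  · exact ⟨∅, computableSet_empty, indexes_empty_iff.2 (congrFun ((phi_encode c).trans hc))⟩
  · obtain ⟨A, -, hA⟩ := hc
    exact phi_encode c ▸ hA.phi_dom
end

section
/- (Mihara's Theorem) Let σ be a REC-social welfare function (with voter set ℕ and set X of alternatives having at least 3 elements) satisfying unanimity and independence on REC-measurable profiles. If σ is pairwise computable, then σ is dictatorial: there exists a voter v0 ∈ ℕ such that for all x, y ∈ X and every REC-measurable profile f, x f(v0) y implies x σ(f) y. -/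
/-- A REC-measurable profile (its restriction is what a REC-social welfare
function is defined on). -/
def GoodProfile {X : Type*} (f : ℕ → X → X → Prop) : Prop :=
  IsProf f ∧ RECMeasurable f

/-- Unanimity, on REC-measurable profiles. -/
def Unanimity {X : Type*} (σ : (ℕ → X → X → Prop) → X → X → Prop) : Prop :=
  ∀ (x y : X) (f : ℕ → X → X → Prop), GoodProfile f → (∀ v : ℕ, f v x y) → σ f x y

/-- Independence, on REC-measurable profiles. -/
def Independence {X : Type*} (σ : (ℕ → X → X → Prop) → X → X → Prop) : Prop :=
  ∀ (x y : X) (f g : ℕ → X → X → Prop), GoodProfile f → GoodProfile g →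
    (∀ v : ℕ, (f v x y ↔ g v x y) ∧ (f v y x ↔ g v y x)) →
    ((σ f x y ↔ σ g x y) ∧ (σ f y x ↔ σ g y x))

/-- Dictatorship, on REC-measurable profiles. -/
def Dictatorial {X : Type*} (σ : (ℕ → X → X → Prop) → X → X → Prop) : Prop :=
  ∃ v0 : ℕ, ∀ (x y : X) (f : ℕ → X → X → Prop), GoodProfile f → f v0 x y → σ f x y

/-- An ultrafilter on the Boolean algebra REC of computable subsets of `ℕ`. -/
def RECUltrafilter (𝒰 : Set (Set ℕ)) : Prop :=
  (∀ A ∈ 𝒰, ComputableSet A) ∧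
  (∀ A B : Set ℕ, A ∈ 𝒰 → ComputableSet B → A ⊆ B → B ∈ 𝒰) ∧
  (∀ A B : Set ℕ, A ∈ 𝒰 → B ∈ 𝒰 → A ∩ B ∈ 𝒰) ∧
  (∅ : Set ℕ) ∉ 𝒰 ∧
  ∀ A : Set ℕ, ComputableSet A → Xor' (A ∈ 𝒰) (Aᶜ ∈ 𝒰)

/-- `𝒰` is decisive for `σ`: coalitions in `𝒰` decide the verdict. -/
def Decisive {X : Type*} (σ : (ℕ → X → X → Prop) → X → X → Prop)
    (𝒰 : Set (Set ℕ)) : Prop :=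
  ∀ U ∈ 𝒰, ∀ (x y : X) (f : ℕ → X → X → Prop), GoodProfile f →
    (∀ v ∈ U, f v x y) → σ f x y

/-- Pairwise computability: for each ordered pair of distinct alternatives there
is a partial recursive function deciding the verdict from any code of the
restricted profile. -/
def PairwiseComputable {X : Type*}
    (σ : (ℕ → X → X → Prop) → X → X → Prop) : Prop :=
  ∀ x y : X, x ≠ y → ∃ γ : ℕ →. ℕ, Partrec γ ∧
    ∀ f : ℕ → X → X → Prop, GoodProfile f → ∀ e1 e2 e3 : ℕ,
      Indexes e1 {v : ℕ | f v x y} → Indexes e2 {v : ℕ | f v y x} →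
      Indexes e3 {v : ℕ | ¬ f v x y ∧ ¬ f v y x} →
      (σ f x y → γ (Nat.pair e1 (Nat.pair e2 e3)) = Part.some 1) ∧
      (¬ σ f x y → γ (Nat.pair e1 (Nat.pair e2 e3)) = Part.some 0)

/-- Decidability of Decisive Coalitions w.r.t. `𝒰`: the partial function `β_σ`
(deciding membership in `𝒰` from indices of computable sets) extends to a
partial recursive function. -/
def DDC (𝒰 : Set (Set ℕ)) : Prop :=
  ∃ g : ℕ →. ℕ, Partrec g ∧ ∀ (e : ℕ) (A : Set ℕ), ComputableSet A → Indexes e A →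
    (A ∈ 𝒰 → g e = Part.some 1) ∧ (A ∉ 𝒰 → g e = Part.some 0)

/-!
The coalitions that are decisive for `σ` form an ultrafilter on the computable sets (Arrow's
argument, in the form of Kirman and Sondermann), and a coalition is decisive as soon as `σ` follows
it in one profile in which it is opposed by everybody else. So an algorithm for the verdicts on a
single pair decides membership in this ultrafilter from an index of the coalition.

Such an algorithm cannot exist if the ultrafilter is free: it would contain every final segment of
`ℕ`, hence the set of stages by which a program has halted would belong to it exactly when the
program halts. So some singleton is decisive, and its element is a dictator.
-/

open Nat.Partrec (Code)

/-! ### Indices of computable sets -/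

theorem ComputableSet.compl {A : Set ℕ} (hA : ComputableSet A) : ComputableSet Aᶜ :=
  ComputablePred.not hA

theorem computableSet_singleton (n : ℕ) : ComputableSet {n} :=
  (Primrec.eq.comp Primrec.id (Primrec.const n)).computablePred

theorem computableSet_setOf_lt {p q : ℕ → ℕ} (hp : Computable p) (hq : Computable q) :
    ComputableSet {v | p v < q v} :=
  ComputablePred.computable_of_manyOneReducible
    ⟨fun v => (p v, q v), hp.pair hq, fun _ => Iff.rfl⟩ Primrec.nat_lt.computablePred

theorem indexes_encode_zero_empty : Indexes (Encodable.encode Code.zero) ∅ := by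
  simp [Indexes, phi_encode, Code.eval, pure, PFun.pure]

theorem exists_computable_indexes_compl :
    ∃ h : ℕ → ℕ, Computable h ∧ ∀ e A, Indexes e A → Indexes (h e) Aᶜ := by
  obtain ⟨neg, hneg⟩ := Code.exists_code.1 <| Partrec.nat_iff.1 <| Computable.partrec <|
    (Primrec.nat_sub.comp (Primrec.const 1) Primrec.id).to_comp
  have hphi_comp (e n : ℕ) :
      phi (Encodable.encode (neg.comp (Denumerable.ofNat Code e))) n = phi e n >>= neg.eval := by
    rw [phi_encode]
    rfl
  refine ⟨fun e => Encodable.encode (neg.comp (Denumerable.ofNat Code e)),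
    Computable.encode.comp <|
      Code.primrec₂_comp.to_comp.comp (Computable.const neg) (Computable.ofNat Code),
    fun e A he n => ⟨fun hn => ?_, fun hn => ?_⟩⟩
  · have hphi : phi e n = Part.some 0 := (he n).2 hn
    rw [hphi_comp, hphi, hneg]
    exact Part.bind_some _ _
  · have hphi : phi e n = Part.some 1 := (he n).1 (not_not.1 hn)
    rw [hphi_comp, hphi, hneg]
    exact Part.bind_some _ _

theorem exists_computable_indexes {α : Type*} [Primcodable α] {χ : α → ℕ → Bool}
    (hχ : Computable₂ χ) :
    ∃ h : α → ℕ, Computable h ∧ ∀ a, Indexes (h a) {n | χ a n} := by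
  have hcharacteristic : Computable fun m : ℕ =>
      ((Encodable.decode (α := α) m.unpair.1).map fun a => (χ a m.unpair.2).toNat).getD 0 := by
    have hvalue : Computable₂ fun (m : ℕ) (a : α) => (χ a m.unpair.2).toNat :=
      (Primrec.dom_bool Bool.toNat).to_comp.comp <| hχ.comp Computable.snd <|
        Computable.snd.comp <| Computable.unpair.comp Computable.fst
    have hdecode : Computable fun m : ℕ => Encodable.decode (α := α) m.unpair.1 :=
      Computable.decode.comp (Computable.fst.comp Computable.unpair)
    exact (hdecode.option_map hvalue).option_getD (Computable.const 0)
  obtain ⟨c, hc⟩ := Code.exists_code.1 (Partrec.nat_iff.1 hcharacteristic.partrec)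
  refine ⟨fun a => Encodable.encode (c.curry (Encodable.encode a)),
    Computable.encode.comp <|
      Code.primrec₂_curry.to_comp.comp (Computable.const c) Computable.encode,
    fun a n => ?_⟩
  cases hn : χ a n <;> simp [phi_encode, Code.eval_curry, hc, hn]

/-! ### Free ultrafilters of computable sets and the halting problem -/

/-- The step bounds under which the program `c` is seen to halt on input `0`. They form a
computable final segment of `ℕ`, empty if `c` diverges. -/
def haltingStages (c : Code) : Set ℕ := {n | (Code.evaln n c 0).isSome}

theorem computable₂_isSome_evaln :
    Computable₂ fun (c : Code) (n : ℕ) => (Code.evaln n c 0).isSome :=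
  (Primrec.option_isSome.comp <| Code.primrec_evaln.comp <|
    (Primrec.snd.pair Primrec.fst).pair (Primrec.const 0)).to_comp

theorem computableSet_haltingStages (c : Code) : ComputableSet (haltingStages c) :=
  ComputablePred.computable_iff.2
    ⟨_, computable₂_isSome_evaln.comp (Computable.const c) Computable.id, rfl⟩

theorem exists_Ici_subset_haltingStages {c : Code} (hc : (c.eval 0).Dom) :
    ∃ n, Set.Ici n ⊆ haltingStages c := by
  obtain ⟨n, hn⟩ := Code.evaln_complete.1 (Part.get_mem hc)
  exact ⟨n, fun m hm => Option.isSome_iff_exists.2 ⟨_, Code.evaln_mono hm hn⟩⟩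

theorem haltingStages_eq_empty {c : Code} (hc : ¬ (c.eval 0).Dom) : haltingStages c = ∅ := by
  refine Set.eq_empty_of_forall_notMem fun n hn => hc ?_
  obtain ⟨k, hk⟩ := Option.isSome_iff_exists.1 hn
  exact Part.dom_iff_mem.2 ⟨k, Code.evaln_sound hk⟩

namespace RECUltrafilter

variable {𝒰 : Set (Set ℕ)}

theorem Ici_mem (h𝒰 : RECUltrafilter 𝒰) (hfree : ∀ v, {v} ∉ 𝒰) (n : ℕ) : Set.Ici n ∈ 𝒰 := by
  obtain ⟨-, -, inter_mem, empty_notMem, xor_compl⟩ := h𝒰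
  have compl_mem {A : Set ℕ} (hA : ComputableSet A) (hA𝒰 : A ∉ 𝒰) : Aᶜ ∈ 𝒰 :=
    (Xor.or (xor_compl A hA)).resolve_left hA𝒰
  induction n with
  | zero =>
    have hempty : ComputableSet ∅ :=
      ComputablePred.computable_iff.2 ⟨fun _ => false, Computable.const false, by simp⟩
    simpa using compl_mem hempty empty_notMem
  | succ n ih =>
    have hdiff : Set.Ici (n + 1) = Set.Ici n ∩ {n}ᶜ := by
      ext v
      simp only [Set.mem_Ici, Set.mem_inter_iff, Set.mem_compl_iff, Set.mem_singleton_iff]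
      lia
    rw [hdiff]
    exact inter_mem _ _ ih (compl_mem (computableSet_singleton n) (hfree n))

theorem haltingStages_mem_iff (h𝒰 : RECUltrafilter 𝒰) (hfree : ∀ v, {v} ∉ 𝒰) (c : Code) :
    haltingStages c ∈ 𝒰 ↔ (c.eval 0).Dom := by
  refine ⟨fun hc => ?_, fun hc => ?_⟩
  · by_contra hdiv
    exact h𝒰.2.2.2.1 (haltingStages_eq_empty hdiv ▸ hc)
  · obtain ⟨n, hn⟩ := exists_Ici_subset_haltingStages hc
    exact h𝒰.2.1 _ _ (h𝒰.Ici_mem hfree n) (computableSet_haltingStages c) hn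

theorem exists_singleton_mem (h𝒰 : RECUltrafilter 𝒰) (hDDC : DDC 𝒰) : ∃ v, {v} ∈ 𝒰 := by
  classical
  by_contra! hfree
  obtain ⟨g, hg, hg𝒰⟩ := hDDC
  obtain ⟨index, hindex, hindexes⟩ := exists_computable_indexes computable₂_isSome_evaln
  have hdecide (c : Code) :
      g (index c) = Part.some (if (c.eval 0).Dom then 1 else 0) := by
    have hgc := hg𝒰 _ _ (computableSet_haltingStages c) (hindexes c)
    rw [h𝒰.haltingStages_mem_iff hfree] at hgc
    split_ifs with hc
    exacts [hgc.1 hc, hgc.2 hc]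
  have hhalt : Computable fun c : Code => if (c.eval 0).Dom then 1 else 0 :=
    (hg.comp hindex).of_eq hdecide
  refine ComputablePred.halting_problem 0 <| ComputablePred.of_eq
    (ComputablePred.computable_of_manyOneReducible ⟨_, hhalt, fun _ => Iff.rfl⟩
      (computableSet_singleton 1)) fun c => ?_
  simp

end RECUltrafilter

/-! ### Profiles -/

section Profiles

variable {X : Type*} {f : ℕ → X → X → Prop} {A : Set ℕ} {x y z : X}

theorem IsWeakPref.trans {P : X → X → Prop} (hP : IsWeakPref P) (hxy : P x y) (hyz : P y z) :
    P x z := by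
  by_contra hxz
  exact hP.2 x z y hxz (hP.1 y z hyz) hxy

theorem IsWeakPref.ne {P : X → X → Prop} (hP : IsWeakPref P) (hxy : P x y) : x ≠ y := by
  rintro rfl
  exact hP.1 x x hxy hxy

/-- The profile in which voter `v` ranks each alternative `x` by the utility `u x v`. -/
def utilityProfile (u : X → ℕ → ℕ) (v : ℕ) (x y : X) : Prop := u x v < u y v

theorem goodProfile_utilityProfile {u : X → ℕ → ℕ} (hu : ∀ x, Computable (u x)) :
    GoodProfile (utilityProfile u) :=
  ⟨fun _ => ⟨fun _ _ => lt_asymm, fun _ _ _ hxy hyz =>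
    not_lt.2 ((not_lt.1 hyz).trans (not_lt.1 hxy))⟩,
    fun x y => computableSet_setOf_lt (hu x) (hu y)⟩

theorem exists_computable_utility (hxy : x ≠ y) (hxz : x ≠ z) (hyz : y ≠ z) {p q r : ℕ → ℕ}
    (hp : Computable p) (hq : Computable q) (hr : Computable r) :
    ∃ u : X → ℕ → ℕ, (∀ w, Computable (u w)) ∧ u x = p ∧ u y = q ∧ u z = r := by
  classical
  refine ⟨fun w => if w = x then p else if w = y then q else r, fun w => ?_, ?_⟩
  · dsimp only
    split_ifs <;> assumption
  · simp [hxy.symm, hxz.symm, hyz.symm]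

open Classical in
theorem ComputableSet.computable_ite_const (hA : ComputableSet A) (m n : ℕ) :
    Computable fun v => if v ∈ A then m else n :=
  ComputablePred.ite (Computable.const m) (Computable.const n) hA

/-- In the profile `f`, the members of `A` prefer `y` to `x` and all other voters prefer `x` to
`y`. -/
def SplitsOn (f : ℕ → X → X → Prop) (A : Set ℕ) (x y : X) : Prop :=
  ∀ v, (f v x y ↔ v ∈ A) ∧ (f v y x ↔ v ∉ A)

theorem SplitsOn.compl (h : SplitsOn f A x y) : SplitsOn f Aᶜ y x := fun v => by
  simpa using (h v).symm

theorem SplitsOn.computableSet (h : SplitsOn f A x y) (hf : GoodProfile f) : ComputableSet A :=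
  ComputablePred.of_eq (hf.2 x y) fun v => (h v).1

theorem exists_goodProfile_splitsOn (hA : ComputableSet A) (hxy : x ≠ y) :
    ∃ f, GoodProfile f ∧ SplitsOn f A x y := by
  classical
  refine ⟨_, goodProfile_utilityProfile
    (u := fun w v => if w = x then if v ∈ A then 0 else 1 else if v ∈ A then 1 else 0)
    fun w => ?_, fun v => ?_⟩
  · split_ifs
    exacts [hA.computable_ite_const 0 1, hA.computable_ite_const 1 0]
  · by_cases hv : v ∈ A <;> simp [utilityProfile, hxy.symm, hv]

end Profiles

/-! ### Decisive coalitions -/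

section Decisiveness

variable {X : Type*}

/-- An Arrovian social welfare function on the REC-measurable profiles: its values are weak orders
and it satisfies unanimity and independence. -/
structure IsArrovian (σ : (ℕ → X → X → Prop) → X → X → Prop) : Prop where
  isWeakPref : ∀ f, GoodProfile f → IsWeakPref (σ f)
  unanimity : Unanimity σ
  independence : Independence σ

/-- Society prefers `y` to `x` whenever all members of `A` do, whatever the other voters think. -/
def DecidesPair (σ : (ℕ → X → X → Prop) → X → X → Prop) (A : Set ℕ) (x y : X) : Prop :=
  ∀ f, GoodProfile f → (∀ v ∈ A, f v x y) → σ f x y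

/-- Society prefers `y` to `x` whenever all members of `A` do and all other voters have the
opposite preference: the almost decisive coalitions of Arrow's theorem. -/
def WeaklyDecidesPair (σ : (ℕ → X → X → Prop) → X → X → Prop) (A : Set ℕ) (x y : X) : Prop :=
  ∀ f, GoodProfile f → SplitsOn f A x y → σ f x y

/-- The computable coalitions that decide every pair of distinct alternatives. For
`x = y` the condition would hold vacuously for every nonempty coalition. -/
def decisiveCoalitions (σ : (ℕ → X → X → Prop) → X → X → Prop) : Set (Set ℕ) :=
  {A | ComputableSet A ∧ Pairwise (DecidesPair σ A)}

/-- The restriction of `PairwiseComputable` to one ordered pair of alternatives. -/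
def VerdictComputable (σ : (ℕ → X → X → Prop) → X → X → Prop) (x y : X) : Prop :=
  ∃ γ : ℕ →. ℕ, Partrec γ ∧
    ∀ f : ℕ → X → X → Prop, GoodProfile f → ∀ e1 e2 e3 : ℕ,
      Indexes e1 {v : ℕ | f v x y} → Indexes e2 {v : ℕ | f v y x} →
      Indexes e3 {v : ℕ | ¬ f v x y ∧ ¬ f v y x} →
      (σ f x y → γ (Nat.pair e1 (Nat.pair e2 e3)) = Part.some 1) ∧
      (¬ σ f x y → γ (Nat.pair e1 (Nat.pair e2 e3)) = Part.some 0)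

variable {σ : (ℕ → X → X → Prop) → X → X → Prop} {f : ℕ → X → X → Prop} {A B : Set ℕ} {x y z : X}

theorem DecidesPair.weaklyDecidesPair (h : DecidesPair σ A x y) : WeaklyDecidesPair σ A x y :=
  fun f hf hs => h f hf fun v hv => (hs v).1.2 hv

theorem Independence.weaklyDecidesPair (hI : Independence σ) (hf : GoodProfile f)
    (hs : SplitsOn f A x y) (hσ : σ f x y) : WeaklyDecidesPair σ A x y := fun g hg hgs =>
  (hI x y f g hf hg fun v =>
    ⟨(hs v).1.trans (hgs v).1.symm, (hs v).2.trans (hgs v).2.symm⟩).1.1 hσ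

theorem exists_ne_ne_of_three (hX : ∃ a b c : X, a ≠ b ∧ a ≠ c ∧ b ≠ c) (x y : X) :
    ∃ z, x ≠ z ∧ y ≠ z := by
  obtain ⟨a, b, c, hab, hac, hbc⟩ := hX
  by_contra! h
  have hcover (w : X) : x = w ∨ y = w := or_iff_not_imp_left.2 (h w)
  grind [hcover a, hcover b, hcover c]

namespace IsArrovian

-- `y` is placed below `z` by everybody and above `x` by `A` only, so `x < y < z` socially.
theorem decidesPair_right (hσ : IsArrovian σ) (hA : ComputableSet A) (hxy : x ≠ y) (hxz : x ≠ z)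
    (hyz : y ≠ z) (h : WeaklyDecidesPair σ A x y) : DecidesPair σ A x z := by
  classical
  intro g hg hgA
  obtain ⟨u, hu, hux, huy, huz⟩ := exists_computable_utility hxy hxz hyz
    ((hg.2 z x).computable_ite_const 3 1) (hA.computable_ite_const 2 0)
    ((hg.2 x z).computable_ite_const 3 1)
  have hf := goodProfile_utilityProfile hu
  have hsplit : SplitsOn (utilityProfile u) A x y := fun v => by
    have hasymm := (hg.1 v).1 x z
    grind [utilityProfile]
  have hunanimous (v : ℕ) : utilityProfile u v y z := by
    grind [utilityProfile]
  have hagree (v : ℕ) :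
      (utilityProfile u v x z ↔ g v x z) ∧ (utilityProfile u v z x ↔ g v z x) := by
    have hasymm := (hg.1 v).1 x z
    grind [utilityProfile]
  refine (hσ.independence x z _ g hf hg hagree).1.1 ?_
  exact (hσ.isWeakPref _ hf).trans (h _ hf hsplit) (hσ.unanimity y z _ hf hunanimous)

-- `x` is placed above `z` by everybody and below `y` by `A` only, so `z < x < y` socially.
theorem decidesPair_left (hσ : IsArrovian σ) (hA : ComputableSet A) (hxy : x ≠ y) (hxz : x ≠ z)
    (hyz : y ≠ z) (h : WeaklyDecidesPair σ A x y) : DecidesPair σ A z y := by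
  classical
  intro g hg hgA
  obtain ⟨u, hu, hux, huy, huz⟩ := exists_computable_utility hxy hxz hyz
    (hA.computable_ite_const 1 3) ((hg.2 z y).computable_ite_const 2 0)
    ((hg.2 y z).computable_ite_const 2 0)
  have hf := goodProfile_utilityProfile hu
  have hsplit : SplitsOn (utilityProfile u) A x y := fun v => by
    grind [utilityProfile]
  have hunanimous (v : ℕ) : utilityProfile u v z x := by
    have hasymm := (hg.1 v).1 z y
    grind [utilityProfile]
  have hagree (v : ℕ) :
      (utilityProfile u v z y ↔ g v z y) ∧ (utilityProfile u v y z ↔ g v y z) := by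
    have hasymm := (hg.1 v).1 z y
    grind [utilityProfile]
  refine (hσ.independence z y _ g hf hg hagree).1.1 ?_
  exact (hσ.isWeakPref _ hf).trans (hσ.unanimity z x _ hf hunanimous) (h _ hf hsplit)

theorem weaklyDecidesPair_right (hσ : IsArrovian σ) (hA : ComputableSet A) (hxy : x ≠ y)
    (hxz : x ≠ z) (h : WeaklyDecidesPair σ A x y) : WeaklyDecidesPair σ A x z := by
  obtain rfl | hyz := eq_or_ne y z
  · exact h
  · exact (hσ.decidesPair_right hA hxy hxz hyz h).weaklyDecidesPair

theorem weaklyDecidesPair_left (hσ : IsArrovian σ) (hA : ComputableSet A) (hxy : x ≠ y)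
    (hzy : z ≠ y) (h : WeaklyDecidesPair σ A x y) : WeaklyDecidesPair σ A z y := by
  obtain rfl | hxz := eq_or_ne x z
  · exact h
  · exact (hσ.decidesPair_left hA hxy hxz hzy.symm h).weaklyDecidesPair

theorem pairwise_weaklyDecidesPair (hσ : IsArrovian σ)
    (hX : ∃ a b c : X, a ≠ b ∧ a ≠ c ∧ b ≠ c) (hA : ComputableSet A) (hxy : x ≠ y)
    (h : WeaklyDecidesPair σ A x y) : Pairwise (WeaklyDecidesPair σ A) := by
  intro a b hab
  obtain ⟨z, hxz, haz⟩ := exists_ne_ne_of_three hX x a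
  have hwxz := hσ.weaklyDecidesPair_right hA hxy hxz h
  have hwaz := hσ.weaklyDecidesPair_left hA hxz haz hwxz
  exact hσ.weaklyDecidesPair_right hA haz hab hwaz

theorem pairwise_decidesPair (hσ : IsArrovian σ)
    (hX : ∃ a b c : X, a ≠ b ∧ a ≠ c ∧ b ≠ c) (hA : ComputableSet A) (hxy : x ≠ y)
    (h : WeaklyDecidesPair σ A x y) : Pairwise (DecidesPair σ A) := by
  intro a b hab
  obtain ⟨z, haz, hbz⟩ := exists_ne_ne_of_three hX a b
  exact hσ.decidesPair_right hA haz hab hbz.symm (hσ.pairwise_weaklyDecidesPair hX hA hxy h haz)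

theorem mem_decisiveCoalitions_iff (hσ : IsArrovian σ)
    (hX : ∃ a b c : X, a ≠ b ∧ a ≠ c ∧ b ≠ c) (hf : GoodProfile f) (hs : SplitsOn f A x y)
    (hxy : x ≠ y) : A ∈ decisiveCoalitions σ ↔ σ f x y := by
  refine ⟨fun hA => (hA.2 hxy).weaklyDecidesPair f hf hs, fun hσf => ?_⟩
  have hA := hs.computableSet hf
  exact ⟨hA, hσ.pairwise_decidesPair hX hA hxy (hσ.independence.weaklyDecidesPair hf hs hσf)⟩

theorem empty_notMem_decisiveCoalitions (hσ : IsArrovian σ)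
    (hxy : x ≠ y) : ∅ ∉ decisiveCoalitions σ := by
  rintro ⟨hempty, hdecides⟩
  obtain ⟨f, hf, hs⟩ := exists_goodProfile_splitsOn hempty hxy
  have hforced : σ f x y := (hdecides hxy).weaklyDecidesPair f hf hs
  have hunanimous : σ f y x := hσ.unanimity y x f hf fun v => (hs v).2.2 (Set.notMem_empty v)
  exact (hσ.isWeakPref f hf).1 x y hforced hunanimous

theorem inter_mem_decisiveCoalitions (hσ : IsArrovian σ)
    (hX : ∃ a b c : X, a ≠ b ∧ a ≠ c ∧ b ≠ c) (hA : A ∈ decisiveCoalitions σ)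
    (hB : B ∈ decisiveCoalitions σ) : A ∩ B ∈ decisiveCoalitions σ := by
  classical
  obtain ⟨a, b, c, hab, hac, hbc⟩ := id hX
  obtain ⟨u, hu, hua, hub, huc⟩ := exists_computable_utility hab hac hbc
    (Computable.const 2) (hA.1.computable_ite_const 3 0)
    (ComputablePred.ite (hB.1.computable_ite_const 4 1) (Computable.const 1) hA.1)
  have hf := goodProfile_utilityProfile hu
  have hσab : σ (utilityProfile u) a b := hA.2 hab _ hf fun v hv => by
    simp [utilityProfile, hua, hub, hv]
  have hσbc : σ (utilityProfile u) b c := hB.2 hbc _ hf fun v hv => by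
    by_cases hvA : v ∈ A <;> simp [utilityProfile, hub, huc, hv, hvA]
  have hsplit : SplitsOn (utilityProfile u) (A ∩ B) a c := fun v => by
    by_cases hvA : v ∈ A <;> by_cases hvB : v ∈ B <;>
      simp [utilityProfile, hua, huc, hvA, hvB]
  exact (hσ.mem_decisiveCoalitions_iff hX hf hsplit hac).2
    ((hσ.isWeakPref _ hf).trans hσab hσbc)

theorem mem_or_compl_mem_decisiveCoalitions (hσ : IsArrovian σ)
    (hX : ∃ a b c : X, a ≠ b ∧ a ≠ c ∧ b ≠ c) (hA : ComputableSet A) :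
    A ∈ decisiveCoalitions σ ∨ Aᶜ ∈ decisiveCoalitions σ := by
  classical
  obtain ⟨a, b, c, hab, hac, hbc⟩ := id hX
  obtain ⟨u, hu, hua, hub, huc⟩ := exists_computable_utility hab hac hbc
    (hA.computable_ite_const 0 3) (Computable.const 2) (Computable.const 1)
  have hf := goodProfile_utilityProfile hu
  have hsplit_ab : SplitsOn (utilityProfile u) A a b := fun v => by
    by_cases hv : v ∈ A <;> simp [utilityProfile, hua, hub, hv]
  have hsplit_ac : SplitsOn (utilityProfile u) A a c := fun v => by
    by_cases hv : v ∈ A <;> simp [utilityProfile, hua, huc, hv]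
  have hσcb : σ (utilityProfile u) c b := hσ.unanimity c b _ hf fun v => by
    simp [utilityProfile, hub, huc]
  rw [hσ.mem_decisiveCoalitions_iff hX hf hsplit_ab hab,
    hσ.mem_decisiveCoalitions_iff hX hf hsplit_ac.compl hac.symm]
  by_contra! hneither
  exact (hσ.isWeakPref _ hf).2 c a b hneither.2 hneither.1 hσcb

theorem compl_notMem_decisiveCoalitions (hσ : IsArrovian σ) (hxy : x ≠ y)
    (hA : A ∈ decisiveCoalitions σ) : Aᶜ ∉ decisiveCoalitions σ := by
  intro hAc
  obtain ⟨f, hf, hs⟩ := exists_goodProfile_splitsOn hA.1 hxy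
  exact (hσ.isWeakPref f hf).1 x y ((hA.2 hxy).weaklyDecidesPair f hf hs)
    ((hAc.2 hxy.symm).weaklyDecidesPair f hf hs.compl)

theorem recUltrafilter_decisiveCoalitions (hσ : IsArrovian σ)
    (hX : ∃ a b c : X, a ≠ b ∧ a ≠ c ∧ b ≠ c) : RECUltrafilter (decisiveCoalitions σ) := by
  obtain ⟨a, b, -, hab, -, -⟩ := id hX
  refine ⟨fun A hA => hA.1, fun A B hA hB hAB => ⟨hB, fun x y hxy f hf hfB => ?_⟩,
    fun A B => hσ.inter_mem_decisiveCoalitions hX, hσ.empty_notMem_decisiveCoalitions hab,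
    fun A hA => ?_⟩
  · exact hA.2 hxy f hf fun v hv => hfB v (hAB hv)
  · exact (xor_iff_or_and_not_and _ _).2 ⟨hσ.mem_or_compl_mem_decisiveCoalitions hX hA,
      fun h => hσ.compl_notMem_decisiveCoalitions hab h.1 h.2⟩

theorem ddc_decisiveCoalitions (hσ : IsArrovian σ) (hX : ∃ a b c : X, a ≠ b ∧ a ≠ c ∧ b ≠ c)
    (hxy : x ≠ y) (hcomp : VerdictComputable σ x y) : DDC (decisiveCoalitions σ) := by
  obtain ⟨γ, hγ, hγσ⟩ := hcomp
  obtain ⟨co, hco, hco_indexes⟩ := exists_computable_indexes_compl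
  refine ⟨fun e => γ (Nat.pair e (Nat.pair (co e) (Encodable.encode Code.zero))),
    hγ.comp <| Primrec₂.natPair.to_comp.comp Computable.id <|
      Primrec₂.natPair.to_comp.comp hco (Computable.const _), fun e A hA he => ?_⟩
  obtain ⟨f, hf, hs⟩ := exists_goodProfile_splitsOn hA hxy
  have hfor : {v | f v x y} = A := Set.ext fun v => (hs v).1
  have hagainst : {v | f v y x} = Aᶜ := Set.ext fun v => (hs v).2
  have hindifferent : {v | ¬ f v x y ∧ ¬ f v y x} = ∅ := by
    ext v
    simp [hs v]
  rw [hσ.mem_decisiveCoalitions_iff hX hf hs hxy]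
  exact hγσ f hf _ _ _ (hfor ▸ he) (hagainst ▸ hco_indexes e A he)
    (hindifferent ▸ indexes_encode_zero_empty)

end IsArrovian

end Decisiveness

theorem mihara_theorem_general {X : Type*}
    (hX : ∃ a b c : X, a ≠ b ∧ a ≠ c ∧ b ≠ c)
    {σ : (ℕ → X → X → Prop) → X → X → Prop} (hσ : IsArrovian σ)
    {a b : X} (hab : a ≠ b) (hcomp : VerdictComputable σ a b) : Dictatorial σ := by
  have hultrafilter := hσ.recUltrafilter_decisiveCoalitions hX
  have hDDC := hσ.ddc_decisiveCoalitions hX hab hcomp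
  obtain ⟨v0, -, hv0⟩ := hultrafilter.exists_singleton_mem hDDC
  refine ⟨v0, fun x y f hf hxy => hv0 ((hf.1 v0).ne hxy) f hf ?_⟩
  rintro v rfl
  exact hxy

/-- Mihara's Theorem: every pairwise computable REC-social welfare
function satisfying unanimity and independence is dictatorial. -/
theorem mihara_theorem {X : Type*}
    (hX : ∃ a b c : X, a ≠ b ∧ a ≠ c ∧ b ≠ c)
    (σ : (ℕ → X → X → Prop) → X → X → Prop)
    (hW : ∀ f : ℕ → X → X → Prop, GoodProfile f → IsWeakPref (σ f))
    (hU : Unanimity σ) (hI : Independence σ)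
    (hPC : PairwiseComputable σ) :
    ∃ v0 : ℕ, ∀ (x y : X) (f : ℕ → X → X → Prop), GoodProfile f →
      f v0 x y → σ f x y := by
  obtain ⟨a, b, -, hab, -, -⟩ := id hX
  exact mihara_theorem_general hX ⟨hW, hU, hI⟩ hab (hPC a b hab)
end
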